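/- arXiv:1705.06500 — 3 statements merged into one kernel-verified Lean document; each statement's English description precedes it below -/
import Mathlib

section
/- (Lemma 1, scaling of transmit power) For every coverage radius R_b > 0, user density λ ≥ 0, hovering altitude h ≥ 0 and data rate S, the expected transmit power factors as P_t(R_b, λ, h, S) = λ·R_b⁴·(2^S − 1)·Γ(h/R_b), where Γ is the kernel function of transmit power. -/
/-!
The line-of-sight probability depends on `(R, h)` only through `h / R`, so the average path loss is
positively homogeneous of degree `2`. The area element `2πR dR` contributes two more powers of
length, and substituting `R = R_b t` in the power integral pulls out the factor `R_b⁴`, leaving the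
integral over `[0, 1]` at the rescaled altitude `h / R_b`.
-/

open Real MeasureTheory intervalIntegral

/-- Positive homogeneity of real degree `r`, for functions of a vector; a function of radius and
altitude is uncurried to a function on `ℝ × ℝ`. Only factors `c > 0` occur, so that the real power
`c ^ r` is the usual one. -/
def IsPosHomogeneous {V E : Type*} [SMul ℝ V] [SMul ℝ E] (r : ℝ) (f : V → E) : Prop :=
  ∀ ⦃c : ℝ⦄, 0 < c → ∀ v, f (c • v) = c ^ r • f v

namespace IsPosHomogeneous

theorem const_smul {V E : Type*} [SMul ℝ V] [MulAction ℝ E] {r : ℝ} {f : V → E}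
    (hf : IsPosHomogeneous r f) (k : ℝ) : IsPosHomogeneous r (k • f) := fun c hc v => by
  simp only [Pi.smul_apply, hf hc, smul_comm k]

theorem mul {V A : Type*} [SMul ℝ V] [Semiring A] [Algebra ℝ A] {r s : ℝ} {f g : V → A}
    (hf : IsPosHomogeneous r f) (hg : IsPosHomogeneous s g) :
    IsPosHomogeneous (r + s) (f * g) := fun c hc v => by
  simp only [Pi.mul_apply, hf hc, hg hc, smul_mul_smul_comm, rpow_add hc]

theorem intervalIntegral_fst {V E : Type*} [MulAction ℝ V] [NormedAddCommGroup E]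
    [NormedSpace ℝ E] {r : ℝ} {f : ℝ × V → E} (hf : IsPosHomogeneous r f) {c : ℝ} (hc : 0 < c)
    (v : V) : ∫ x in (0 : ℝ)..c, f (x, v) = c ^ (r + 1) • ∫ x in (0 : ℝ)..1, f (x, c⁻¹ • v) := by
  have hscale (x : ℝ) : f (c * x, v) = c ^ r • f (x, c⁻¹ • v) := by
    simpa [smul_inv_smul₀ hc.ne'] using hf hc (x, c⁻¹ • v)
  calc
    ∫ x in (0 : ℝ)..c, f (x, v) = c • ∫ x in (0 : ℝ)..1, f (c * x, v) := by
      simpa using (smul_integral_comp_mul_left (a := 0) (b := 1) (fun x => f (x, v)) c).symm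
    _ = c • c ^ r • ∫ x in (0 : ℝ)..1, f (x, c⁻¹ • v) := by
      simp only [hscale, intervalIntegral.integral_smul]
    _ = c ^ (r + 1) • ∫ x in (0 : ℝ)..1, f (x, c⁻¹ • v) := by
      rw [smul_smul, rpow_add_one hc.ne', mul_comm]

end IsPosHomogeneous

theorem isPosHomogeneous_fst {V : Type*} [SMul ℝ V] :
    IsPosHomogeneous 1 (Prod.fst : ℝ × V → ℝ) := fun c _ v => by
  simp only [Prod.smul_fst, rpow_one]

theorem isPosHomogeneous_sq_add_sq :
    IsPosHomogeneous 2 (fun p : ℝ × ℝ => p.1 ^ 2 + p.2 ^ 2) := fun c _ p => by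
  simp only [Prod.smul_fst, Prod.smul_snd, smul_eq_mul, rpow_two]
  ring

theorem isPosHomogeneous_comp_snd_div_fst {E : Type*} [MulAction ℝ E] (g : ℝ → E) :
    IsPosHomogeneous 0 (fun p : ℝ × ℝ => g (p.2 / p.1)) := fun c hc p => by
  simp only [Prod.smul_fst, Prod.smul_snd, smul_eq_mul, mul_div_mul_left _ _ hc.ne', rpow_zero,
    one_smul]

theorem isPosHomogeneous_pathLoss {L : ℝ → ℝ → ℝ} {K : ℝ} (g : ℝ → ℝ)
    (hL : ∀ R h, L R h = K * (R ^ 2 + h ^ 2) * g (h / R)) :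
    IsPosHomogeneous 2 (Function.uncurry L) := by
  have hfactor : Function.uncurry L =
      (K • fun p : ℝ × ℝ => p.1 ^ 2 + p.2 ^ 2) * fun p => g (p.2 / p.1) :=
    funext fun p => hL p.1 p.2
  rw [hfactor, ← add_zero 2]
  exact (isPosHomogeneous_sq_add_sq.const_smul K).mul (isPosHomogeneous_comp_snd_div_fst g)

theorem transmit_power_scaling_general {r N₀ : ℝ} {L : ℝ → ℝ → ℝ} {Pt : ℝ → ℝ → ℝ → ℝ → ℝ}
    {Γ : ℝ → ℝ} (hL : IsPosHomogeneous r (Function.uncurry L))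
    (hPt : ∀ Rb lam h S : ℝ,
      Pt Rb lam h S = lam * ((2 : ℝ) ^ S - 1) * ∫ R in (0 : ℝ)..Rb, 2 * π * R * L R h * N₀)
    (hΓ : ∀ x : ℝ, Γ x = ∫ R in (0 : ℝ)..(1 : ℝ), 2 * π * R * L R x * N₀)
    {Rb : ℝ} (hRb : 0 < Rb) (lam h S : ℝ) :
    Pt Rb lam h S = lam * Rb ^ (r + 2) * ((2 : ℝ) ^ S - 1) * Γ (h / Rb) := by
  have hintegrand : IsPosHomogeneous (1 + r) fun p : ℝ × ℝ => 2 * π * p.1 * L p.1 p.2 * N₀ := by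
    have hfactor : (fun p : ℝ × ℝ => 2 * π * p.1 * L p.1 p.2 * N₀) =
        (2 * π * N₀) • (Prod.fst * Function.uncurry L) := by
      funext p
      simp only [Pi.smul_apply, Pi.mul_apply, Function.uncurry, smul_eq_mul]
      ring
    rw [hfactor]
    exact (isPosHomogeneous_fst.mul hL).const_smul (2 * π * N₀)
  have hscale : ∫ R in (0 : ℝ)..Rb, 2 * π * R * L R h * N₀ = Rb ^ (r + 2) * Γ (h / Rb) := by
    rw [hΓ, hintegrand.intervalIntegral_fst hRb h, smul_eq_mul, smul_eq_mul, inv_mul_eq_div,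
      show 1 + r + 1 = r + 2 by ring]
  rw [hPt, hscale]
  ring

/-- Lemma 1: Scaling of the expected transmit power:
`P_t(R_b, λ, h, S) = λ · R_b⁴ · (2^S − 1) · Γ(h / R_b)`. -/
theorem transmit_power_scaling
    (a b η₀ η₁ K N₀ : ℝ) (ha : 0 < a) (hb : 0 < b) (hη₀ : 0 < η₀) (hη₁ : 0 < η₁)
    (hK : 0 < K) (hN₀ : 0 < N₀)
    (θ P₀ L : ℝ → ℝ → ℝ) (Pt : ℝ → ℝ → ℝ → ℝ → ℝ) (Γ : ℝ → ℝ)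
    (hθ : ∀ R h : ℝ, θ R h = (180 / π) * arctan (h / R))
    (hP₀ : ∀ R h : ℝ, P₀ R h = 1 / (1 + a * exp (-b * (θ R h - a))))
    (hL : ∀ R h : ℝ, L R h = K * (R ^ 2 + h ^ 2) * (η₁ + P₀ R h * (η₀ - η₁)))
    (hPt : ∀ Rb lam h S : ℝ,
      Pt Rb lam h S = lam * ((2 : ℝ) ^ S - 1) * ∫ R in (0 : ℝ)..Rb, 2 * π * R * L R h * N₀)
    (hΓ : ∀ x : ℝ, Γ x = ∫ R in (0 : ℝ)..(1 : ℝ), 2 * π * R * L R x * N₀)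
    (Rb lam h S : ℝ) (hRb : 0 < Rb) (hlam : 0 ≤ lam) (hh : 0 ≤ h) :
    Pt Rb lam h S = lam * Rb ^ 4 * ((2 : ℝ) ^ S - 1) * Γ (h / Rb) := by
  have hL_hom : IsPosHomogeneous 2 (Function.uncurry L) :=
    isPosHomogeneous_pathLoss
      (fun t => η₁ + 1 / (1 + a * exp (-b * (180 / π * arctan t - a))) * (η₀ - η₁))
      fun R h => by rw [hL, hP₀, hθ]
  have hscaling := transmit_power_scaling_general hL_hom hPt hΓ hRb lam h S
  rwa [show (2 : ℝ) + 2 = (4 : ℕ) by norm_num, rpow_natCast] at hscaling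
end

section
/- (Corollary 1) Fix a coverage radius R_b > 0, user density λ > 0 and data rate S > 0. A hovering altitude h* ≥ 0 minimizes the function h ↦ P_t(R_b, λ, h, S) over [0,∞) if and only if the normalized altitude h*/R_b minimizes the kernel function Γ over [0,∞). In particular, if h_n* minimizes Γ on [0,∞), then the optimal hovering altitude is h* = R_b·h_n*, i.e. it is proportional to the coverage radius with a slope depending only on the environment. -/
open Real MeasureTheory intervalIntegral

/-!
The elevation angle depends on `R` and `h` only through `h / R`, so under `(R, h) ↦ (c R, c h)` the
LOS probability is invariant and the average path loss is multiplied by `c²`. Substituting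
`R = R_b r` in the power integral gives `P_t(R_b, λ, R_b x, S) = λ (2^S - 1) R_b⁴ Γ(x)`, so the two
minimization problems differ by positive rescalings of the variable and of the objective.
-/

lemma isMinOn_image_iff_of_comp_eq {α β γ δ : Type*} [LinearOrder γ] [Preorder δ] {f : β → δ}
    {e : α → β} {φ : γ → δ} {g : α → γ} {s : Set α} {a : α} (hφ : StrictMono φ)
    (hfg : ∀ x ∈ s, f (e x) = φ (g x)) (ha : a ∈ s) :
    IsMinOn f (e '' s) (e a) ↔ IsMinOn g s a := by
  simp only [isMinOn_iff, Set.forall_mem_image]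
  exact forall₂_congr fun x hx => by rw [hfg x hx, hfg a ha, hφ.le_iff_le]

/-- The power that covers a disc of radius `ρ` from altitude `h` when the path loss is `L` and the
weight `λ (2^S - 1)` is `1`. The kernel function `Γ` is the case `ρ = 1`, and `P_t` is the case
`ρ = R_b` times that weight. -/
noncomputable def discPower (L : ℝ → ℝ → ℝ) (N₀ ρ h : ℝ) : ℝ :=
  ∫ R in (0 : ℝ)..ρ, 2 * π * R * L R h * N₀

section Scaling

variable {L : ℝ → ℝ → ℝ} {N₀ c C : ℝ}

lemma discPower_mul_mul {ρ h : ℝ} (hρ : 0 ≤ ρ) (hL : ∀ R > 0, L (c * R) (c * h) = C * L R h) :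
    discPower L N₀ (c * ρ) (c * h) = c ^ 2 * C * discPower L N₀ ρ h := by
  have hintegrand : ∀ R ∈ Set.Ioo 0 ρ, 2 * π * (c * R) * L (c * R) (c * h) * N₀ =
      c * C * (2 * π * R * L R h * N₀) := by
    intro R hR
    rw [hL R hR.1]
    ring
  calc discPower L N₀ (c * ρ) (c * h)
      = c * ∫ R in (0 : ℝ)..ρ, 2 * π * (c * R) * L (c * R) (c * h) * N₀ := by
        rw [← smul_eq_mul c (∫ _ in _.._, _),
          smul_integral_comp_mul_left (fun R => 2 * π * R * L R (c * h) * N₀), mul_zero, discPower]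
    _ = c * (c * C * discPower L N₀ ρ h) := by
        rw [integral_congr_Ioo_of_le hρ hintegrand, intervalIntegral.integral_const_mul,
          discPower]
    _ = c ^ 2 * C * discPower L N₀ ρ h := by ring

lemma pathLoss_mul_mul {P : ℝ → ℝ → ℝ} {K η₀ η₁ R h : ℝ}
    (hL : ∀ R h, L R h = K * (R ^ 2 + h ^ 2) * (η₁ + P R h * (η₀ - η₁)))
    (hP : P (c * R) (c * h) = P R h) :
    L (c * R) (c * h) = c ^ 2 * L R h := by
  rw [hL, hL, hP]
  ring

end Scaling

theorem optimal_altitude_proportional_to_radius_general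
    {L : ℝ → ℝ → ℝ} {Pt : ℝ → ℝ → ℝ → ℝ → ℝ} {Γ : ℝ → ℝ} {N₀ Rb lam S C : ℝ}
    (hPt : ∀ Rb lam h S : ℝ,
      Pt Rb lam h S = lam * ((2 : ℝ) ^ S - 1) * ∫ R in (0 : ℝ)..Rb, 2 * π * R * L R h * N₀)
    (hΓ : ∀ x : ℝ, Γ x = ∫ R in (0 : ℝ)..(1 : ℝ), 2 * π * R * L R x * N₀)
    (hRb : 0 < Rb) (hlam : 0 < lam) (hS : 0 < S) (hC : 0 < C)
    (hL : ∀ R > 0, ∀ h ≥ 0, L (Rb * R) (Rb * h) = C * L R h) :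
    (∀ hstar : ℝ, 0 ≤ hstar →
      (IsMinOn (fun h : ℝ => Pt Rb lam h S) (Set.Ici 0) hstar ↔
        IsMinOn Γ (Set.Ici 0) (hstar / Rb))) ∧
    (∀ hn : ℝ, 0 ≤ hn → IsMinOn Γ (Set.Ici 0) hn →
      IsMinOn (fun h : ℝ => Pt Rb lam h S) (Set.Ici 0) (Rb * hn)) := by
  have hrate : 0 < (2 : ℝ) ^ S - 1 := sub_pos.2 (one_lt_rpow one_lt_two hS)
  have hfactor : 0 < lam * ((2 : ℝ) ^ S - 1) * (Rb ^ 2 * C) := by positivity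
  have hpower : ∀ x ∈ Set.Ici 0, Pt Rb lam (Rb * x) S =
      lam * ((2 : ℝ) ^ S - 1) * (Rb ^ 2 * C) * Γ x := by
    intro x hx
    have hdisc := discPower_mul_mul (N₀ := N₀) zero_le_one fun R hR => hL R hR x hx
    rw [mul_one, discPower, discPower, ← hΓ] at hdisc
    rw [hPt, hdisc, ← mul_assoc]
  have himage : (Rb * ·) '' Set.Ici 0 = Set.Ici 0 := by rw [Set.image_mul_left_Ici hRb, mul_zero]
  have hiff : ∀ x ≥ 0, IsMinOn (fun h => Pt Rb lam h S) (Set.Ici 0) (Rb * x) ↔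
      IsMinOn Γ (Set.Ici 0) x := by
    intro x hx
    rw [← isMinOn_image_iff_of_comp_eq (f := fun h => Pt Rb lam h S) (e := (Rb * ·))
      (strictMono_mul_left_of_pos hfactor) hpower hx, himage]
  refine ⟨fun hstar hstar_nonneg => ?_, fun hn hn_nonneg => (hiff hn hn_nonneg).2⟩
  rw [← hiff _ (div_nonneg hstar_nonneg hRb.le), mul_div_cancel₀ hstar hRb.ne']

/-- Corollary 1: `h*` minimizes `h ↦ P_t(R_b, λ, h, S)` on `[0,∞)` iff
`h*/R_b` minimizes the kernel `Γ` on `[0,∞)`; in particular, if `h_n*` minimizes `Γ`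
on `[0,∞)` then `R_b · h_n*` minimizes the transmit power, i.e. the optimal altitude
is proportional to the coverage radius. -/
theorem optimal_altitude_proportional_to_radius
    (a b η₀ η₁ K N₀ : ℝ) (ha : 0 < a) (hb : 0 < b) (hη₀ : 0 < η₀) (hη₁ : 0 < η₁)
    (hK : 0 < K) (hN₀ : 0 < N₀)
    (θ P₀ L : ℝ → ℝ → ℝ) (Pt : ℝ → ℝ → ℝ → ℝ → ℝ) (Γ : ℝ → ℝ)
    (hθ : ∀ R h : ℝ, θ R h = (180 / π) * arctan (h / R))
    (hP₀ : ∀ R h : ℝ, P₀ R h = 1 / (1 + a * exp (-b * (θ R h - a))))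
    (hL : ∀ R h : ℝ, L R h = K * (R ^ 2 + h ^ 2) * (η₁ + P₀ R h * (η₀ - η₁)))
    (hPt : ∀ Rb lam h S : ℝ,
      Pt Rb lam h S = lam * ((2 : ℝ) ^ S - 1) * ∫ R in (0 : ℝ)..Rb, 2 * π * R * L R h * N₀)
    (hΓ : ∀ x : ℝ, Γ x = ∫ R in (0 : ℝ)..(1 : ℝ), 2 * π * R * L R x * N₀)
    (Rb lam S : ℝ) (hRb : 0 < Rb) (hlam : 0 < lam) (hS : 0 < S) :
    (∀ hstar : ℝ, 0 ≤ hstar →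
      (IsMinOn (fun h : ℝ => Pt Rb lam h S) (Set.Ici 0) hstar ↔
        IsMinOn Γ (Set.Ici 0) (hstar / Rb))) ∧
    (∀ hn : ℝ, 0 ≤ hn → IsMinOn Γ (Set.Ici 0) hn →
      IsMinOn (fun h : ℝ => Pt Rb lam h S) (Set.Ici 0) (Rb * hn)) := by
  have hP₀_scale : ∀ R h, P₀ (Rb * R) (Rb * h) = P₀ R h := fun R h => by
    rw [hP₀, hP₀, hθ, hθ, mul_div_mul_left h R hRb.ne']
  exact optimal_altitude_proportional_to_radius_general hPt hΓ hRb hlam hS (pow_pos hRb 2)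
    fun R _ h _ => pathLoss_mul_mul hL (hP₀_scale R h)
end

section
/- The kernel function of transmit power grows at least quadratically in the normalized altitude: for every h ≥ 0, Γ(h) ≥ 2π·N₀·K·min(η₀, η₁)·(1/4 + h²/2); consequently Γ(h) → ∞ as h → ∞. -/
open Real MeasureTheory intervalIntegral Filter

/-!
The path-loss factor `η₁ + P₀ (η₀ - η₁)` is a convex combination of `η₀` and `η₁`, hence at least
`min η₀ η₁`. Replacing it by this constant leaves the integral of `R (R² + h²)` over `[0, 1]`,
which is quadratic in `h`.
-/

theorem integral_mul_sq_add (a b c : ℝ) :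
    ∫ x in a..b, x * (x ^ 2 + c) = ((b ^ 2 + c) ^ 2 - (a ^ 2 + c) ^ 2) / 4 := by
  have hderiv (x : ℝ) : HasDerivAt (fun x => (x ^ 2 + c) ^ 2 / 4) (x * (x ^ 2 + c)) x := by
    refine ((((hasDerivAt_pow 2 x).add_const c).pow 2).div_const 4).congr_deriv ?_
    push_cast
    ring
  rw [integral_eq_sub_of_hasDerivAt (fun x _ => hderiv x)
    (Continuous.intervalIntegrable (by fun_prop) a b)]
  ring

theorem mul_integral_le_integral_mul_of_mem_Icc {α : Type*} [MeasurableSpace α] {μ : Measure α}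
    {f w : α → ℝ} {m M : ℝ} (hf : Integrable f μ) (hf₀ : 0 ≤ᵐ[μ] f)
    (hw : AEStronglyMeasurable w μ) (hmem : ∀ᵐ x ∂μ, w x ∈ Set.Icc m M) :
    m * ∫ x, f x ∂μ ≤ ∫ x, w x * f x ∂μ := by
  have hbdd : ∀ᵐ x ∂μ, ‖w x‖ ≤ max |m| |M| :=
    hmem.mono fun x hx => abs_le_max_abs_abs hx.1 hx.2
  rw [← MeasureTheory.integral_const_mul]
  refine integral_mono_ae (hf.const_mul m) (hf.bdd_mul hw hbdd) ?_
  filter_upwards [hf₀, hmem] with x hfx hwx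
  exact mul_le_mul_of_nonneg_right hwx.1 hfx

theorem min_mul_le_integral_add_mul_sub_mul {a b c η₀ η₁ : ℝ} {p : ℝ → ℝ}
    (ha : 0 ≤ a) (hab : a ≤ b) (hc : 0 ≤ c)
    (hp : Measurable p) (hp_mem : ∀ x, p x ∈ Set.Icc 0 1) :
    min η₀ η₁ * (((b ^ 2 + c) ^ 2 - (a ^ 2 + c) ^ 2) / 4) ≤
      ∫ x in a..b, (η₁ + p x * (η₀ - η₁)) * (x * (x ^ 2 + c)) := by
  have hint : IntervalIntegrable (fun x : ℝ => x * (x ^ 2 + c)) volume a b :=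
    Continuous.intervalIntegrable (by fun_prop) a b
  have hnonneg : ∀ᵐ x ∂volume.restrict (Set.Ioc a b), 0 ≤ x * (x ^ 2 + c) :=
    ae_restrict_of_forall_mem measurableSet_Ioc fun x hx =>
      mul_nonneg (ha.trans hx.1.le) (add_nonneg (sq_nonneg x) hc)
  have hconvex (x : ℝ) : η₁ + p x * (η₀ - η₁) ∈ Set.uIcc η₀ η₁ :=
    (convex_uIcc η₀ η₁).add_smul_sub_mem Set.right_mem_uIcc Set.left_mem_uIcc (hp_mem x)
  rw [← integral_mul_sq_add, integral_of_le hab, integral_of_le hab]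
  exact mul_integral_le_integral_mul_of_mem_Icc hint.1 hnonneg
    (Measurable.aestronglyMeasurable (by fun_prop)) (.of_forall hconvex)

theorem kernel_function_quadratic_growth_general
    {η₀ η₁ K N₀ : ℝ} (hη₀ : 0 < η₀) (hη₁ : 0 < η₁) (hK : 0 < K) (hN₀ : 0 < N₀)
    {P₀ L : ℝ → ℝ → ℝ} {Γ : ℝ → ℝ}
    (hP₀ : ∀ h : ℝ, Measurable fun R => P₀ R h) (hP₀_mem : ∀ R h : ℝ, P₀ R h ∈ Set.Icc 0 1)
    (hL : ∀ R h : ℝ, L R h = K * (R ^ 2 + h ^ 2) * (η₁ + P₀ R h * (η₀ - η₁)))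
    (hΓ : ∀ x : ℝ, Γ x = ∫ R in (0 : ℝ)..(1 : ℝ), 2 * π * R * L R x * N₀) :
    (∀ h : ℝ, Γ h ≥ 2 * π * N₀ * K * min η₀ η₁ * (1 / 4 + h ^ 2 / 2)) ∧
    Tendsto Γ atTop atTop := by
  have hbound (h : ℝ) : 2 * π * N₀ * K * min η₀ η₁ * (1 / 4 + h ^ 2 / 2) ≤ Γ h := calc
    _ = 2 * π * N₀ * K *
        (min η₀ η₁ * (((1 ^ 2 + h ^ 2) ^ 2 - (0 ^ 2 + h ^ 2) ^ 2) / 4)) := by ring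
    _ ≤ 2 * π * N₀ * K *
        ∫ R in (0 : ℝ)..1, (η₁ + P₀ R h * (η₀ - η₁)) * (R * (R ^ 2 + h ^ 2)) := by
      gcongr
      exact min_mul_le_integral_add_mul_sub_mul le_rfl zero_le_one (sq_nonneg h) (hP₀ h)
        (hP₀_mem · h)
    _ = Γ h := by
      rw [hΓ, ← intervalIntegral.integral_const_mul]
      congr 1 with R
      rw [hL]
      ring
  have hquad : Tendsto (fun h : ℝ => 1 / 4 + h ^ 2 / 2) atTop atTop :=
    tendsto_atTop_add_const_left _ _ ((tendsto_pow_atTop two_ne_zero).atTop_div_const two_pos)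
  exact ⟨hbound, tendsto_atTop_mono hbound (hquad.const_mul_atTop (by positivity))⟩

/-- The line-of-sight probability `P₀(R, h)` of the air-to-ground channel: a logistic function of
the elevation angle in degrees. At `R = 0`, a null set for the integral defining `Γ`, the junk
value `h / 0 = 0` gives the angle `0` instead of `90`. -/
noncomputable def losProbability (a b R h : ℝ) : ℝ :=
  1 / (1 + a * exp (-b * ((180 / π) * arctan (h / R) - a)))

theorem measurable_losProbability (a b h : ℝ) : Measurable fun R => losProbability a b R h := by
  unfold losProbability
  fun_prop

theorem losProbability_mem_Icc {a : ℝ} (ha : 0 ≤ a) (b R h : ℝ) :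
    losProbability a b R h ∈ Set.Icc 0 1 :=
  unitInterval.div_mem zero_le_one (by positivity) (le_add_of_nonneg_right (by positivity))

/-- The kernel function grows at least quadratically in the normalized
altitude: `Γ(h) ≥ 2π·N₀·K·min(η₀,η₁)·(1/4 + h²/2)` for all `h ≥ 0`; consequently
`Γ(h) → ∞` as `h → ∞`. -/
theorem kernel_function_quadratic_growth
    (a b η₀ η₁ K N₀ : ℝ) (ha : 0 < a) (hb : 0 < b) (hη₀ : 0 < η₀) (hη₁ : 0 < η₁)
    (hK : 0 < K) (hN₀ : 0 < N₀)
    (θ P₀ L : ℝ → ℝ → ℝ) (Γ : ℝ → ℝ)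
    (hθ : ∀ R h : ℝ, θ R h = (180 / π) * arctan (h / R))
    (hP₀ : ∀ R h : ℝ, P₀ R h = 1 / (1 + a * exp (-b * (θ R h - a))))
    (hL : ∀ R h : ℝ, L R h = K * (R ^ 2 + h ^ 2) * (η₁ + P₀ R h * (η₀ - η₁)))
    (hΓ : ∀ x : ℝ, Γ x = ∫ R in (0 : ℝ)..(1 : ℝ), 2 * π * R * L R x * N₀) :
    (∀ h : ℝ, 0 ≤ h →
      Γ h ≥ 2 * π * N₀ * K * min η₀ η₁ * (1 / 4 + h ^ 2 / 2)) ∧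
    Tendsto Γ atTop atTop := by
  obtain rfl : P₀ = losProbability a b := by
    ext R h
    rw [hP₀, hθ, losProbability]
  obtain ⟨hbound, hlim⟩ := kernel_function_quadratic_growth_general hη₀ hη₁ hK hN₀
    (measurable_losProbability a b) (losProbability_mem_Icc ha.le b) hL hΓ
  exact ⟨fun h _ => hbound h, hlim⟩
end
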